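/- arXiv:2307.13769 — 2 statements merged into one kernel-verified Lean document; each statement's English description precedes it below -/
import Mathlib

section
/- Let a, b ∈ ℝ and c > 0 with c ≥ max{a, b}. If a(a+1)b(b+1) ≥ 0 then the function z ↦ F(a,b;c;z) is convex on [0,1), and if a(a+1)b(b+1) ≤ 0 then it is concave on [0,1). -/
open Real Set MeasureTheory

/-- Pochhammer symbol (rising factorial) for a real argument. -/
noncomputable def poch (x : ℝ) (n : ℕ) : ℝ := ∏ i ∈ Finset.range n, (x + i)

/-- Gauss hypergeometric series. -/
noncomputable def hyperF (a b c z : ℝ) : ℝ :=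
  ∑' n : ℕ, poch a n * poch b n / (poch c n * (n.factorial : ℝ)) * z ^ n


/-- coefficient -/
noncomputable def hcoef (a b c : ℝ) (n : ℕ) : ℝ :=
  poch a n * poch b n / (poch c n * (n.factorial : ℝ))

def GoodSeq (u : ℕ → ℝ) : Prop := ∀ r : ℝ, 0 ≤ r → r < 1 → Summable (fun n => |u n| * r ^ n)

theorem poch_succ (x : ℝ) (n : ℕ) : poch x (n + 1) = poch x n * (x + n) := by
  simp [poch, Finset.prod_range_succ]

theorem poch_shift (x : ℝ) (n : ℕ) : poch x (n + 1) = x * poch (x + 1) n := by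
  simp only [poch, Finset.prod_range_succ']
  rw [mul_comm]
  congr 1
  · simp
  · apply Finset.prod_congr rfl
    intro i _
    push_cast
    ring

theorem poch_pos {x : ℝ} (hx : 0 < x) (n : ℕ) : 0 < poch x n := by
  unfold poch
  apply Finset.prod_pos
  intro i _
  positivity

theorem hcoef_succ (a b c : ℝ) (hc : 0 < c) (n : ℕ) :
    hcoef a b c (n + 1) = hcoef a b c n * ((a + n) * (b + n) / ((c + n) * (n + 1))) := by
  unfold hcoef
  have h1 := (poch_pos hc n).ne'
  have h2 : c + n ≠ 0 := by positivity
  have h3 : (n.factorial : ℝ) ≠ 0 := by positivity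
  rw [poch_succ, poch_succ, poch_succ, Nat.factorial_succ]
  push_cast
  field_simp

theorem hcoef_deriv (a b c : ℝ) (hc : 0 < c) (n : ℕ) :
    ((n : ℝ) + 1) * hcoef a b c (n + 1) = a * b / c * hcoef (a + 1) (b + 1) (c + 1) n := by
  unfold hcoef
  have h1 := (poch_pos (show 0 < c + 1 by linarith) n).ne'
  have h3 : (n.factorial : ℝ) ≠ 0 := by positivity
  rw [poch_shift, poch_shift, poch_shift, Nat.factorial_succ]
  push_cast
  field_simp

theorem hcoef_cshift (a b c : ℝ) (hc : 0 < c) (n : ℕ) :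
    hcoef a b (c + 1) n = hcoef a b c n * (c / (c + n)) := by
  unfold hcoef
  have h1 := (poch_pos (show 0 < c + 1 by linarith) n).ne'
  have h0 := (poch_pos hc n).ne'
  have h3 : (n.factorial : ℝ) ≠ 0 := by positivity
  have h2 : c + n ≠ 0 := by positivity
  have := poch_succ c n
  rw [poch_shift] at this
  field_simp
  linear_combination (-poch a n * poch b n) * this

theorem hcoef_good (a b c : ℝ) (hc : 0 < c) : GoodSeq (hcoef a b c) := by
  intro r hr0 hr1
  obtain ⟨s, hs, hs1⟩ := exists_between hr1
  apply summable_of_ratio_norm_eventually_le hs1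
  have hlim : Filter.Tendsto (fun n : ℕ => |(a + n) * (b + n) / ((c + n) * (n + 1))| * r)
      Filter.atTop (nhds r) := by
    have key : ∀ x y : ℝ, Filter.Tendsto (fun n : ℕ => (x + n) / (y + n)) Filter.atTop (nhds 1) := by
      intro x y
      have := tendsto_add_mul_div_add_mul_atTop_nhds (𝕜 := ℝ) x y 1 (d := 1) one_ne_zero
      simpa using this
    have := (((key a c).mul (key b 1)).abs).mul_const r
    simp only [mul_one, abs_one, one_mul] at this
    refine this.congr ?_
    intro n
    rw [div_mul_div_comm, add_comm (1:ℝ) (n:ℝ)]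
  filter_upwards [hlim.eventually_le_const hs] with n hn
  rw [hcoef_succ a b c hc, abs_mul]
  simp only [norm_mul, norm_pow, Real.norm_eq_abs, abs_abs, abs_of_nonneg hr0]
  calc _ = (|(a + n) * (b + n) / ((c + n) * (n + 1))| * r) * (|hcoef a b c n| * r ^ n) := by ring
    _ ≤ _ := by gcongr

theorem GoodSeq.deriv {u : ℕ → ℝ} (hu : GoodSeq u) :
    GoodSeq (fun n => ((n : ℝ) + 1) * u (n + 1)) := by
  intro r hr0 hr1
  obtain ⟨s, hs, hs1⟩ := exists_between hr1
  have hs0 : 0 < s := lt_of_le_of_lt hr0 hs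
  have h1 := (summable_nat_add_iff 1).2 (hu s hs0.le hs1)
  have hq0 : 0 ≤ r / s := by positivity
  have hq1 : r / s < 1 := (div_lt_one hs0).2 hs
  have hlim : Filter.Tendsto (fun n : ℕ => ((n : ℝ) + 1) * (r / s) ^ n)
      Filter.atTop (nhds 0) := by
    have := (tendsto_self_mul_const_pow_of_lt_one hq0 hq1).add
      (tendsto_pow_atTop_nhds_zero_of_lt_one hq0 hq1)
    simp only [add_zero] at this
    refine this.congr ?_
    intro n
    ring
  refine Summable.of_norm_bounded_eventually_nat (h1.mul_left (1 / s)) ?_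
  filter_upwards [hlim.eventually_le_const one_pos] with n hn
  have hn1 : |(n : ℝ) + 1| = n + 1 := abs_of_nonneg (by positivity)
  simp only [norm_mul, norm_pow, Real.norm_eq_abs, abs_abs, abs_of_nonneg hr0, abs_mul, hn1]
  rw [div_pow] at hn
  have hsn : 0 < s ^ n := by positivity
  have h2 : ((n : ℝ) + 1) * r ^ n ≤ s ^ n := by
    rw [← mul_div_assoc, div_le_one hsn] at hn
    exact hn
  calc _ = |u (n + 1)| * (((n : ℝ) + 1) * r ^ n) := by ring
    _ ≤ |u (n + 1)| * s ^ n := by gcongr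
    _ = _ := by rw [pow_succ]; field_simp

theorem GoodSeq.summable {u : ℕ → ℝ} (hu : GoodSeq u) {z : ℝ} (hz : |z| < 1) :
    Summable (fun n => u n * z ^ n) := by
  apply Summable.of_norm
  simpa [norm_mul] using hu |z| (abs_nonneg _) hz

theorem GoodSeq.hasDerivAt {u : ℕ → ℝ} (hu : GoodSeq u) {z : ℝ} (hz : |z| < 1) :
    HasDerivAt (fun z => ∑' n, u n * z ^ n) (∑' n : ℕ, ((n : ℝ) + 1) * u (n + 1) * z ^ n) z := by
  obtain ⟨s, hs, hs1⟩ := exists_between hz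
  have hs0 : 0 ≤ s := (abs_nonneg z).trans hs.le
  have hsum : Summable (fun n : ℕ => |u n| * (n * s ^ (n - 1))) := by
    apply (summable_nat_add_iff 1).1
    refine (hu.deriv s hs0 hs1).congr ?_
    intro n
    have hn1 : |(n : ℝ) + 1| = n + 1 := abs_of_nonneg (by positivity)
    simp only [abs_mul, hn1, Nat.add_sub_cancel]
    push_cast
    ring
  have hzb : z ∈ Metric.ball (0 : ℝ) s := by simpa using hs
  have h := hasDerivAt_tsum_of_isPreconnected (g := fun n z => u n * z ^ n)
    (g' := fun n z => u n * (n * z ^ (n - 1))) (t := Metric.ball (0 : ℝ) s) (y₀ := z) (y := z)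
    hsum Metric.isOpen_ball (convex_ball (0 : ℝ) s).isPreconnected
    (fun n y _ => (hasDerivAt_pow n y).const_mul (u n))
    (by
      intro n y hy
      have hy' : |y| < s := by simpa using hy
      simp only [norm_mul, norm_pow, Real.norm_eq_abs, Nat.abs_cast]
      gcongr) hzb (hu.summable hz) hzb
  refine HasDerivAt.congr_deriv h (Eq.symm ?_)
  have hsum2 : Summable (fun n : ℕ => u n * (n * z ^ (n - 1))) := by
    refine Summable.of_norm_bounded hsum ?_
    intro n
    simp only [norm_mul, norm_pow, Real.norm_eq_abs, Nat.abs_cast]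
    gcongr
  rw [hsum2.tsum_eq_zero_add]
  simp only [Nat.cast_zero, zero_mul, mul_zero, zero_add, Nat.add_sub_cancel]
  apply tsum_congr
  intro n
  push_cast
  ring

theorem hyperF_eq (a b c z : ℝ) : hyperF a b c z = ∑' n, hcoef a b c n * z ^ n := rfl

theorem hyperF_hasDerivAt (a b c : ℝ) (hc : 0 < c) {z : ℝ} (hz : |z| < 1) :
    HasDerivAt (hyperF a b c) (a * b / c * hyperF (a + 1) (b + 1) (c + 1) z) z := by
  have h := (hcoef_good a b c hc).hasDerivAt hz
  refine HasDerivAt.congr_deriv (f := hyperF a b c) h (Eq.symm ?_)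
  rw [hyperF_eq, ← tsum_mul_left]
  apply tsum_congr
  intro n
  rw [hcoef_deriv a b c hc, mul_assoc]

/-- contiguity relation for the derivative -/
theorem hyperF_contig (a b c : ℝ) (hc : 0 < c) {z : ℝ} (hz : |z| < 1) :
    (1 - z) * (a * b / c * hyperF (a + 1) (b + 1) (c + 1) z) - (a + b - c) * hyperF a b c z
      = (c - a) * (c - b) / c * hyperF a b (c + 1) z := by
  have hg := hcoef_good a b c hc
  have hd : a * b / c * hyperF (a + 1) (b + 1) (c + 1) z
      = ∑' n : ℕ, ((n : ℝ) + 1) * hcoef a b c (n + 1) * z ^ n := by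
    rw [hyperF_eq, ← tsum_mul_left]
    apply tsum_congr
    intro n
    rw [hcoef_deriv a b c hc, mul_assoc]
  have s1 := hg.deriv.summable hz
  have s0 := hg.summable hz
  have s2 : Summable (fun n : ℕ => (n : ℝ) * hcoef a b c n * z ^ n) := by
    apply (summable_nat_add_iff 1).1
    refine (s1.mul_left z).congr ?_
    intro n
    push_cast
    ring
  have e2 : z * ∑' n : ℕ, ((n : ℝ) + 1) * hcoef a b c (n + 1) * z ^ n
      = ∑' n : ℕ, (n : ℝ) * hcoef a b c n * z ^ n := by
    rw [s2.tsum_eq_zero_add, ← tsum_mul_left]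
    simp only [Nat.cast_zero, zero_mul, zero_add]
    apply tsum_congr
    intro n
    push_cast
    ring
  rw [hd, sub_mul, one_mul, e2, hyperF_eq, hyperF_eq, ← tsum_mul_left, ← tsum_mul_left,
    ← s1.tsum_sub s2, ← (s1.sub s2).tsum_sub (s0.mul_left _)]
  apply tsum_congr
  intro n
  rw [hcoef_succ a b c hc, hcoef_cshift a b c hc]
  have h2 : c + n ≠ 0 := by positivity
  field_simp
  ring

theorem hyperF_zero (a b c : ℝ) : hyperF a b c 0 = 1 := by
  rw [hyperF_eq, tsum_eq_single 0]
  · simp [hcoef, poch]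
  · intro n hn
    simp [hn]

/-- one step down the ladder -/
theorem hyperF_step (a b c r : ℝ) (hc : 0 < c) (hac : a ≤ c) (hbc : b ≤ c) (hr1 : r < 1)
    (h : ∀ z ∈ Set.Icc 0 r, 0 ≤ hyperF a b (c + 1) z) :
    ∀ z ∈ Set.Icc 0 r, 0 ≤ hyperF a b c z := by
  intro z hz
  have habs : ∀ x ∈ Set.Icc 0 r, |x| < 1 := by
    intro x hx
    rw [abs_of_nonneg hx.1]
    exact hx.2.trans_lt hr1
  have hder : ∀ x ∈ Set.Icc 0 r, HasDerivAt (fun x => (1 - x) ^ (a + b - c) * hyperF a b c x)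
      ((1 - x) ^ (a + b - c - 1) * ((c - a) * (c - b) / c * hyperF a b (c + 1) x)) x := by
    intro x hx
    have hx1 : 0 < 1 - x := by linarith [hx.2]
    have h1 : HasDerivAt (fun x : ℝ => 1 - x) (-1) x := by
      simpa using (hasDerivAt_id x).const_sub 1
    have h2 := h1.rpow_const (p := a + b - c) (Or.inl hx1.ne')
    have h3 := h2.mul (hyperF_hasDerivAt a b c hc (habs x hx))
    refine HasDerivAt.congr_deriv h3 (Eq.symm ?_)
    rw [← hyperF_contig a b c hc (habs x hx)]
    have : (1 - x) ^ (a + b - c) = (1 - x) ^ (a + b - c - 1) * (1 - x) := by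
      rw [Real.rpow_sub_one hx1.ne']
      field_simp
    rw [this]
    ring
  have hmono : MonotoneOn (fun x => (1 - x) ^ (a + b - c) * hyperF a b c x) (Set.Icc 0 r) := by
    apply monotoneOn_of_hasDerivWithinAt_nonneg (convex_Icc 0 r)
      (fun x hx => (hder x hx).continuousAt.continuousWithinAt)
      (fun x hx => (hder x (interior_subset hx)).hasDerivWithinAt)
    intro x hx
    have hx := interior_subset hx
    have hx1 : 0 < 1 - x := by linarith [hx.2]
    have := h x hx
    have h5 : 0 ≤ c - a := by linarith
    have h6 : 0 ≤ c - b := by linarith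
    positivity
  have h0 := hmono (Set.left_mem_Icc.2 (hz.1.trans hz.2)) hz hz.1
  simp only [hyperF_zero, sub_zero, Real.one_rpow, mul_one] at h0
  have hz1 : 0 < 1 - z := by linarith [hz.2]
  have hp : 0 < (1 - z) ^ (a + b - c) := by positivity
  by_contra hneg
  push Not at hneg
  nlinarith [mul_neg_of_pos_of_neg hp hneg]

theorem poch_ratio (c : ℝ) (hc : 0 < c) (m n : ℕ) :
    (c + m) * poch c (n + 1) ≤ c * poch (c + m) (n + 1) := by
  rw [poch_shift, poch_shift]
  have : poch (c + 1) n ≤ poch (c + m + 1) n := by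
    unfold poch
    apply Finset.prod_le_prod
    · intro i _
      positivity
    · intro i _
      have : (0 : ℝ) ≤ m := by positivity
      linarith
  have hm : 0 ≤ (c + m) * c := by positivity
  nlinarith [mul_le_mul_of_nonneg_left this hm]

theorem hcoef_ratio (a b c : ℝ) (hc : 0 < c) (m n : ℕ) :
    |hcoef a b (c + m) (n + 1)| ≤ c / (c + m) * |hcoef a b c (n + 1)| := by
  have hcm : 0 < c + m := by positivity
  have h1 := poch_pos hc (n + 1)
  have h2 := poch_pos hcm (n + 1)
  have h3 : (0 : ℝ) < ((n + 1).factorial : ℝ) := by positivity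
  unfold hcoef
  rw [abs_div, abs_div, abs_of_pos (mul_pos h1 h3), abs_of_pos (mul_pos h2 h3),
    div_mul_div_comm, div_le_div_iff₀ (by positivity) (by positivity)]
  have := mul_le_mul_of_nonneg_left (poch_ratio c hc m n)
    (show 0 ≤ |poch a (n + 1) * poch b (n + 1)| * ((n + 1).factorial : ℝ) by positivity)
  linarith

theorem hyperF_large (a b c r : ℝ) (hc : 0 < c) (hr0 : 0 ≤ r) (hr1 : r < 1) :
    ∃ m : ℕ, ∀ z ∈ Set.Icc 0 r, 0 ≤ hyperF a b (c + m) z := by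
  have hS := (summable_nat_add_iff 1).2 (hcoef_good a b c hc r hr0 hr1)
  obtain ⟨m, hm⟩ := exists_nat_ge (c * ∑' n : ℕ, |hcoef a b c (n + 1)| * r ^ (n + 1))
  refine ⟨m, fun z hz => ?_⟩
  have hcm : 0 < c + m := by positivity
  have hz1 : |z| < 1 := by
    rw [abs_of_nonneg hz.1]
    exact hz.2.trans_lt hr1
  have hs := (hcoef_good a b (c + m) hcm).summable hz1
  rw [hyperF_eq, hs.tsum_eq_zero_add]
  have h0 : hcoef a b (c + m) 0 * z ^ 0 = 1 := by simp [hcoef, poch]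
  rw [h0]
  have hb : ‖∑' n : ℕ, hcoef a b (c + m) (n + 1) * z ^ (n + 1)‖
      ≤ ∑' n : ℕ, c / (c + m) * (|hcoef a b c (n + 1)| * r ^ (n + 1)) := by
    apply tsum_of_norm_bounded (hS.mul_left _).hasSum
    intro n
    rw [norm_mul, norm_pow, Real.norm_eq_abs, Real.norm_eq_abs, abs_of_nonneg hz.1, ← mul_assoc]
    have hz0 := hz.1
    have hz2 := hz.2
    have := hcoef_ratio a b c hc m n
    gcongr
  rw [tsum_mul_left, Real.norm_eq_abs] at hb
  have h2 : c / (c + m) * ∑' n : ℕ, |hcoef a b c (n + 1)| * r ^ (n + 1) ≤ 1 := by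
    rw [div_mul_eq_mul_div, div_le_one hcm]
    linarith
  linarith [neg_abs_le (∑' n : ℕ, hcoef a b (c + m) (n + 1) * z ^ (n + 1))]

theorem hyperF_nonneg (a b c z : ℝ) (hc : 0 < c) (hac : a ≤ c) (hbc : b ≤ c)
    (hz0 : 0 ≤ z) (hz1 : z < 1) : 0 ≤ hyperF a b c z := by
  obtain ⟨m, hm⟩ := hyperF_large a b c z hc hz0 hz1
  have key : ∀ m : ℕ, ∀ c : ℝ, 0 < c → a ≤ c → b ≤ c →
      (∀ x ∈ Set.Icc 0 z, 0 ≤ hyperF a b (c + m) x) → ∀ x ∈ Set.Icc 0 z, 0 ≤ hyperF a b c x := by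
    intro m
    induction m with
    | zero =>
      intro c _ _ _ h
      simpa using h
    | succ k ih =>
      intro c hc hac hbc h
      apply hyperF_step a b c z hc hac hbc hz1
      apply ih (c + 1) (by linarith) (by linarith) (by linarith)
      intro x hx
      have := h x hx
      rwa [show c + 1 + (k : ℝ) = c + ((k + 1 : ℕ) : ℝ) by push_cast; ring]
  exact key m c hc hac hbc hm z (Set.right_mem_Icc.2 hz0)

theorem hyperF_convex_concave (a b c : ℝ) (hc : 0 < c) (hac : a ≤ c) (hbc : b ≤ c) :
    (0 ≤ a * (a + 1) * b * (b + 1) →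
      ConvexOn ℝ (Set.Ico (0 : ℝ) 1) (fun z => hyperF a b c z)) ∧
    (a * (a + 1) * b * (b + 1) ≤ 0 →
      ConcaveOn ℝ (Set.Ico (0 : ℝ) 1) (fun z => hyperF a b c z)) := by
  have habs : ∀ x ∈ Set.Ico (0 : ℝ) 1, |x| < 1 := by
    intro x hx
    rw [abs_of_nonneg hx.1]
    exact hx.2
  have d1 : ∀ x ∈ Set.Ico (0 : ℝ) 1, HasDerivAt (hyperF a b c)
      (a * b / c * hyperF (a + 1) (b + 1) (c + 1) x) x :=
    fun x hx => hyperF_hasDerivAt a b c hc (habs x hx)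
  have d2 : ∀ x ∈ Set.Ico (0 : ℝ) 1,
      HasDerivAt (fun x => a * b / c * hyperF (a + 1) (b + 1) (c + 1) x)
      (a * (a + 1) * b * (b + 1) *
        (1 / (c * (c + 1)) * hyperF (a + 1 + 1) (b + 1 + 1) (c + 1 + 1) x)) x := by
    intro x hx
    have := (hyperF_hasDerivAt (a + 1) (b + 1) (c + 1) (by linarith) (habs x hx)).const_mul
      (a * b / c)
    refine this.congr_deriv ?_
    have : c + 1 ≠ 0 := by linarith
    field_simp
  have hp : ∀ x ∈ Set.Ico (0 : ℝ) 1,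
      0 ≤ 1 / (c * (c + 1)) * hyperF (a + 1 + 1) (b + 1 + 1) (c + 1 + 1) x := by
    intro x hx
    have := hyperF_nonneg (a + 1 + 1) (b + 1 + 1) (c + 1 + 1) x (by linarith) (by linarith)
      (by linarith) hx.1 hx.2
    positivity
  constructor
  · intro h
    exact convexOn_of_hasDerivWithinAt2_nonneg (convex_Ico 0 1)
      (fun x hx => (d1 x hx).continuousAt.continuousWithinAt)
      (fun x hx => (d1 x (interior_subset hx)).hasDerivWithinAt)
      (fun x hx => (d2 x (interior_subset hx)).hasDerivWithinAt)
      (fun x hx => mul_nonneg h (hp x (interior_subset hx)))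
  · intro h
    exact concaveOn_of_hasDerivWithinAt2_nonpos (convex_Ico 0 1)
      (fun x hx => (d1 x hx).continuousAt.continuousWithinAt)
      (fun x hx => (d1 x (interior_subset hx)).hasDerivWithinAt)
      (fun x hx => (d2 x (interior_subset hx)).hasDerivWithinAt)
      (fun x hx => mul_nonpos_of_nonpos_of_nonneg h (hp x (interior_subset hx)))
end

section
/- Let d ≥ 2 be an integer and γ ∈ ℝ. For x ∈ ℝ^d with |x| ≠ 1, ∫_{S^{d-1}} |x - ω|^γ dω = 2 π^{d/2} Γ(d/2)^{-1} (1+|x|)^γ F(-γ/2, (d-1)/2; d-1; 4|x|/(1+|x|)²), where the integral is with respect to the surface measure on the unit sphere. -/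
open Real Set MeasureTheory

open Module

lemma poch_hasSum (a u : ℝ) (hu : |u| < 1) :
    HasSum (fun n : ℕ => poch a n / (n.factorial : ℝ) * u ^ n) ((1 - u) ^ (-a)) := by
  have h := (Real.one_div_one_sub_rpow_hasFPowerSeriesOnBall_zero a).hasSum_sub (y := u)
    (by simpa [Metric.mem_eball, edist_dist, Real.dist_eq] using hu)
  have h1 : (0:ℝ) ≤ 1 - u := by linarith [(abs_lt.1 hu).2]
  rw [Real.rpow_neg h1, ← one_div]
  refine (congrArg (fun f => HasSum f _) (funext fun n => ?_)).mpr h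
  have key : poch a n = (n.factorial : ℝ) * Ring.choose (a + n - 1) n := by
    rw [← Ring.multichoose_eq, ← nsmul_eq_mul, Ring.factorial_nsmul_multichoose_eq_ascPochhammer,
      Polynomial.ascPochhammer_smeval_eq_eval]
    induction n with
    | zero => simp [poch]
    | succ n ih =>
      rw [ascPochhammer_succ_eval, ← ih]
      exact Finset.prod_range_succ _ _
  have : (n.factorial : ℝ) ≠ 0 := by positivity
  rw [key]
  rw [mul_div_cancel_left₀ _ this]
  simp [FormalMultilinearSeries.ofScalars]

lemma radial_integrableOn (m : ℕ) :
    IntegrableOn (fun y : ℝ => y ^ m * Real.exp (-y ^ 2)) (Ioi 0) := by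
  have := integrableOn_rpow_mul_exp_neg_rpow (s := m) (p := 2)
    (by have : (0:ℝ) ≤ m := by positivity
        linarith) two_pos
  simpa using this

lemma radial_integral (m : ℕ) :
    ∫ y in Ioi (0:ℝ), y ^ m * Real.exp (-y ^ 2) = 1 / 2 * Real.Gamma (((m:ℝ) + 1) / 2) := by
  have := integral_rpow_mul_exp_neg_rpow (q := m) (p := 2) two_pos
    (by have : (0:ℝ) ≤ m := by positivity
        linarith)
  simpa using this

variable {d : ℕ}

lemma gauss_integrable (hd : 2 ≤ d) (e : EuclideanSpace ℝ (Fin d)) (he : ‖e‖ = 1) (k : ℕ) :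
    Integrable (fun y : EuclideanSpace ℝ (Fin d) => inner ℝ e y ^ k * Real.exp (-‖y‖ ^ 2)) := by
  have : Nonempty (Fin d) := ⟨⟨0, by omega⟩⟩
  have h : Integrable (fun y : EuclideanSpace ℝ (Fin d) => ‖y‖ ^ k * Real.exp (-‖y‖ ^ 2)) := by
    have := (integrable_fun_norm_addHaar (volume : Measure (EuclideanSpace ℝ (Fin d)))
      (f := fun r : ℝ => r ^ k * Real.exp (-r ^ 2))).2
    apply this
    simpa [← mul_assoc, ← pow_add] using radial_integrableOn (d - 1 + k)
  refine h.mono' (by fun_prop) (.of_forall fun y => ?_)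
  rw [norm_mul, norm_pow, Real.norm_eq_abs, Real.norm_eq_abs, Real.abs_exp]
  gcongr
  simpa [he] using abs_real_inner_le_norm e y

lemma fderiv_pow_inner (e y : EuclideanSpace ℝ (Fin d)) (he : ‖e‖ = 1) (k : ℕ) :
    fderiv ℝ (fun y : EuclideanSpace ℝ (Fin d) => inner ℝ e y ^ k) y e
      = k * inner ℝ e y ^ (k - 1) := by
  have h : HasFDerivAt (fun y : EuclideanSpace ℝ (Fin d) => inner ℝ e y) (innerSL ℝ e) y :=
    (innerSL ℝ e).hasFDerivAt
  rw [(h.pow k).fderiv]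
  simp [he]

lemma fderiv_gauss (e y : EuclideanSpace ℝ (Fin d)) :
    fderiv ℝ (fun y : EuclideanSpace ℝ (Fin d) => Real.exp (-‖y‖ ^ 2)) y e
      = -2 * inner ℝ e y * Real.exp (-‖y‖ ^ 2) := by
  have h : HasFDerivAt (fun y : EuclideanSpace ℝ (Fin d) => Real.exp (-‖y‖ ^ 2)) _ y :=
    ((hasStrictFDerivAt_norm_sq y).hasFDerivAt.neg).exp
  rw [h.fderiv]
  simp [real_inner_comm]
  ring

lemma gauss_rec (hd : 2 ≤ d) (e : EuclideanSpace ℝ (Fin d)) (he : ‖e‖ = 1) (k : ℕ) :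
    2 * ∫ y : EuclideanSpace ℝ (Fin d), inner ℝ e y ^ (k + 1) * Real.exp (-‖y‖ ^ 2) =
      k * ∫ y : EuclideanSpace ℝ (Fin d), inner ℝ e y ^ (k - 1) * Real.exp (-‖y‖ ^ 2) := by
  have h := integral_mul_fderiv_eq_neg_fderiv_mul_of_integrable
    (μ := (volume : Measure (EuclideanSpace ℝ (Fin d))))
    (f := fun y : EuclideanSpace ℝ (Fin d) => inner ℝ e y ^ k)
    (g := fun y : EuclideanSpace ℝ (Fin d) => Real.exp (-‖y‖ ^ 2)) (v := e)
    ?_ ?_ ?_ ?_ ?_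
  · simp_rw [fderiv_pow_inner e _ he, fderiv_gauss] at h
    rw [← integral_const_mul, ← integral_const_mul]
    have h1 : ∀ y : EuclideanSpace ℝ (Fin d),
      inner ℝ e y ^ k * (-2 * inner ℝ e y * Real.exp (-‖y‖ ^ 2)) =
        - (2 * (inner ℝ e y ^ (k + 1) * Real.exp (-‖y‖ ^ 2))) := fun y => by ring
    simp_rw [h1, integral_neg, mul_assoc] at h
    linarith
  · simp_rw [fderiv_pow_inner e _ he, mul_assoc]
    exact (gauss_integrable hd e he _).const_mul _
  · simp_rw [fderiv_gauss]
    refine ((gauss_integrable hd e he (k+1)).const_mul (-2)).congr (.of_forall fun y => ?_)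
    ring
  · exact gauss_integrable hd e he _
  · intro y _
    exact ((innerSL ℝ e).differentiableAt).pow k
  · intro y _
    exact ((hasStrictFDerivAt_norm_sq y).hasFDerivAt.neg).exp.differentiableAt

lemma gauss_polar (hd : 2 ≤ d) (e : EuclideanSpace ℝ (Fin d)) (k : ℕ) :
    ∫ y : EuclideanSpace ℝ (Fin d), inner ℝ e y ^ k * Real.exp (-‖y‖ ^ 2) =
      (∫ ω : Metric.sphere (0 : EuclideanSpace ℝ (Fin d)) 1,
        inner ℝ e (ω : EuclideanSpace ℝ (Fin d)) ^ k ∂(volume.toSphere)) *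
      (1 / 2 * Real.Gamma (((d:ℝ) + k) / 2)) := by
  have : Nonempty (Fin d) := ⟨⟨0, by omega⟩⟩
  set μ : Measure (EuclideanSpace ℝ (Fin d)) := volume with hμ
  calc
    _ = ∫ x : ({(0)}ᶜ : Set (EuclideanSpace ℝ (Fin d))),
        inner ℝ e (x.1) ^ k * Real.exp (-‖x.1‖ ^ 2) ∂(μ.comap (↑)) := by
      rw [integral_subtype_comap (measurableSet_singleton _).compl
        fun y : EuclideanSpace ℝ (Fin d) ↦ inner ℝ e y ^ k * Real.exp (-‖y‖ ^ 2),
        restrict_compl_singleton]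
    _ = ∫ p, (inner ℝ e (p.1 : EuclideanSpace ℝ (Fin d)) ^ k) *
          ((p.2 : ℝ) ^ k * Real.exp (-(p.2 : ℝ) ^ 2))
          ∂μ.toSphere.prod (.volumeIoiPow (finrank ℝ (EuclideanSpace ℝ (Fin d)) - 1)) := by
      rw [← μ.measurePreserving_homeomorphUnitSphereProd.integral_comp
        (Homeomorph.measurableEmbedding _)]
      refine integral_congr_ae (.of_forall fun y => ?_)
      have hy : ‖(y : EuclideanSpace ℝ (Fin d))‖ ≠ 0 := by
        exact norm_ne_zero_iff.2 y.2
      simp only [homeomorphUnitSphereProd_apply_snd_coe, homeomorphUnitSphereProd_apply_fst_coe,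
        inner_smul_right, mul_pow, inv_pow]
      field_simp
    _ = _ := by
      rw [integral_prod_mul (fun ω : Metric.sphere (0 : EuclideanSpace ℝ (Fin d)) 1 =>
        inner ℝ e (ω : EuclideanSpace ℝ (Fin d)) ^ k)
        (fun r : Ioi (0:ℝ) => (r : ℝ) ^ k * Real.exp (-(r : ℝ) ^ 2))]
      congr 1
      simp only [Measure.volumeIoiPow, ENNReal.ofReal]
      rw [integral_withDensity_eq_integral_smul,
        integral_subtype_comap measurableSet_Ioi fun a : ℝ ↦
          Real.toNNReal (a ^ (finrank ℝ (EuclideanSpace ℝ (Fin d)) - 1)) •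
            (a ^ k * Real.exp (-a ^ 2)),
        setIntegral_congr_fun (g := fun y : ℝ => y ^ (d - 1 + k) * Real.exp (-y ^ 2))
          measurableSet_Ioi fun x hx ↦ ?_, radial_integral]
      · congr 3
        have : ((d - 1 : ℕ) : ℝ) = d - 1 := by
          rw [Nat.cast_sub (by omega)]; simp
        push_cast [this]
        ring
      · simp only [NNReal.smul_def, Real.coe_toNNReal _ (pow_nonneg (le_of_lt hx.out) _)]
        simp [pow_add, mul_assoc]
      · exact (measurable_subtype_coe.pow_const _).real_toNNReal

/-- moments of the linear coordinate on the sphere -/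
noncomputable def sphMom (e : EuclideanSpace ℝ (Fin d)) (k : ℕ) : ℝ :=
  ∫ ω : Metric.sphere (0 : EuclideanSpace ℝ (Fin d)) 1,
        inner ℝ e (ω : EuclideanSpace ℝ (Fin d)) ^ k ∂(volume.toSphere)

lemma sphMom_one (hd : 2 ≤ d) (e : EuclideanSpace ℝ (Fin d)) (he : ‖e‖ = 1) :
    sphMom e 1 = 0 := by
  have h := gauss_rec hd e he 0
  rw [gauss_polar hd] at h
  have hg : 0 < Real.Gamma (((d:ℝ) + (0 + 1 : ℕ)) / 2) := Real.Gamma_pos_of_pos (by positivity)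
  have : sphMom e 1 * (1 / 2 * Real.Gamma (((d:ℝ) + (0 + 1 : ℕ)) / 2)) = 0 := by
    simpa [sphMom] using h
  rcases mul_eq_zero.1 this with h | h
  · exact h
  · linarith

lemma sphMom_rec (hd : 2 ≤ d) (e : EuclideanSpace ℝ (Fin d)) (he : ‖e‖ = 1) (k : ℕ) :
    ((d : ℝ) + k) * sphMom e (k + 2) = (k + 1) * sphMom e k := by
  have h := gauss_rec hd e he (k + 1)
  rw [gauss_polar hd, gauss_polar hd] at h
  have hpos : (0:ℝ) < ((d:ℝ) + k) / 2 := by positivity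
  have hg := Real.Gamma_pos_of_pos hpos
  have e1 : ((d:ℝ) + (k + 1 + 1 : ℕ)) / 2 = ((d:ℝ) + k) / 2 + 1 := by push_cast; ring
  rw [e1, Real.Gamma_add_one hpos.ne'] at h
  simp only [Nat.add_sub_cancel] at h
  change 2 * (sphMom e (k+2) * _) = _ * (sphMom e k * _) at h
  push_cast at h
  apply mul_right_cancel₀ hg.ne'
  linarith

lemma sph_cont_integrable (f : Metric.sphere (0 : EuclideanSpace ℝ (Fin d)) 1 → ℝ)
    (hf : Continuous f) :
    Integrable f ((volume : Measure (EuclideanSpace ℝ (Fin d))).toSphere) :=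
  hf.integrable_of_hasCompactSupport (HasCompactSupport.of_compactSpace f)

lemma sph_poly (hd : 2 ≤ d) (e : EuclideanSpace ℝ (Fin d)) (he : ‖e‖ = 1)
    (p : Polynomial ℝ) :
    ∫ ω : Metric.sphere (0 : EuclideanSpace ℝ (Fin d)) 1,
      ((1 - inner ℝ e (ω : EuclideanSpace ℝ (Fin d)) ^ 2) *
          p.derivative.eval (inner ℝ e (ω : EuclideanSpace ℝ (Fin d))) -
        ((d : ℝ) - 1) * inner ℝ e (ω : EuclideanSpace ℝ (Fin d)) *
          p.eval (inner ℝ e (ω : EuclideanSpace ℝ (Fin d)))) ∂(volume.toSphere) = 0 := by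
  have hc : Continuous fun ω : Metric.sphere (0 : EuclideanSpace ℝ (Fin d)) 1 =>
    inner ℝ e (ω : EuclideanSpace ℝ (Fin d)) := by fun_prop
  induction p using Polynomial.induction_on' with
  | add p q hp hq =>
    have := integral_add (sph_cont_integrable (d := d) _ ?_) (sph_cont_integrable (d := d) _ ?_)
      |>.trans (congrArg₂ (· + ·) hp hq)
    · simp only [add_zero] at this
      rw [← this]
      refine integral_congr_ae (.of_forall fun ω => ?_)
      simp
      ring
    · have := p.continuous.comp hc
      have := p.derivative.continuous.comp hc
      fun_prop
    · have := q.continuous.comp hc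
      have := q.derivative.continuous.comp hc
      fun_prop
  | monomial n a =>
    rcases n with _ | k
    · have := sphMom_one hd e he
      unfold sphMom at this
      simp only [pow_one] at this
      simp [integral_neg, integral_mul_const, integral_const_mul, this]
    · have h := sphMom_rec hd e he k
      have i1 := sph_cont_integrable (d := d) (fun ω => inner ℝ e (ω : EuclideanSpace ℝ (Fin d)) ^ k)
        (hc.pow k)
      have i2 := sph_cont_integrable (d := d)
        (fun ω => inner ℝ e (ω : EuclideanSpace ℝ (Fin d)) ^ (k + 2)) (hc.pow (k+2))
      have : ∀ ω : Metric.sphere (0 : EuclideanSpace ℝ (Fin d)) 1,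
        ((1 - inner ℝ e (ω : EuclideanSpace ℝ (Fin d)) ^ 2) *
          (Polynomial.monomial (k+1) a).derivative.eval (inner ℝ e (ω : EuclideanSpace ℝ (Fin d))) -
        ((d : ℝ) - 1) * inner ℝ e (ω : EuclideanSpace ℝ (Fin d)) *
          (Polynomial.monomial (k+1) a).eval (inner ℝ e (ω : EuclideanSpace ℝ (Fin d))))
        = a * (k+1) * inner ℝ e (ω : EuclideanSpace ℝ (Fin d)) ^ k -
          a * (d + k) * inner ℝ e (ω : EuclideanSpace ℝ (Fin d)) ^ (k + 2) := by
        intro ω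
        simp
        ring
      simp_rw [this]
      rw [integral_sub (i1.const_mul _) (i2.const_mul _), integral_const_mul, integral_const_mul]
      change a * (k+1) * sphMom e k - a * (d + k) * sphMom e (k+2) = 0
      linear_combination (-a) * h

/-- shifted moments -/
noncomputable def sphS (e : EuclideanSpace ℝ (Fin d)) (n : ℕ) : ℝ :=
  ∫ ω : Metric.sphere (0 : EuclideanSpace ℝ (Fin d)) 1,
        ((1 + inner ℝ e (ω : EuclideanSpace ℝ (Fin d))) / 2) ^ n ∂(volume.toSphere)

lemma sphS_rec (hd : 2 ≤ d) (e : EuclideanSpace ℝ (Fin d)) (he : ‖e‖ = 1) (n : ℕ) :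
    ((d : ℝ) - 1 + n) * sphS e (n + 1) = (((d : ℝ) - 1) / 2 + n) * sphS e n := by
  have h := sph_poly hd e he ((Polynomial.C (1/2) * (1 + Polynomial.X)) ^ n)
  have hc : Continuous fun ω : Metric.sphere (0 : EuclideanSpace ℝ (Fin d)) 1 =>
    (1 + inner ℝ e (ω : EuclideanSpace ℝ (Fin d))) / 2 := by fun_prop
  have i1 := sph_cont_integrable (d := d)
    (fun ω => ((1 + inner ℝ e (ω : EuclideanSpace ℝ (Fin d))) / 2) ^ n) (hc.pow n)
  have i2 := sph_cont_integrable (d := d)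
    (fun ω => ((1 + inner ℝ e (ω : EuclideanSpace ℝ (Fin d))) / 2) ^ (n + 1)) (hc.pow (n+1))
  have : ∀ ω : Metric.sphere (0 : EuclideanSpace ℝ (Fin d)) 1,
      ((1 - inner ℝ e (ω : EuclideanSpace ℝ (Fin d)) ^ 2) *
        ((Polynomial.C (1/2) * (1 + Polynomial.X)) ^ n : Polynomial ℝ).derivative.eval
          (inner ℝ e (ω : EuclideanSpace ℝ (Fin d))) -
      ((d : ℝ) - 1) * inner ℝ e (ω : EuclideanSpace ℝ (Fin d)) *
        ((Polynomial.C (1/2) * (1 + Polynomial.X)) ^ n : Polynomial ℝ).eval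
          (inner ℝ e (ω : EuclideanSpace ℝ (Fin d))))
      = (2 * n + d - 1) * ((1 + inner ℝ e (ω : EuclideanSpace ℝ (Fin d))) / 2) ^ n -
        2 * (d - 1 + n) * ((1 + inner ℝ e (ω : EuclideanSpace ℝ (Fin d))) / 2) ^ (n + 1) := by
    intro ω
    rcases n with _ | n
    · simp
      ring
    · rw [Polynomial.derivative_pow]
      simp
      ring
  simp_rw [this] at h
  rw [integral_sub (i1.const_mul _) (i2.const_mul _), integral_const_mul, integral_const_mul] at h
  change (2 * n + d - 1) * sphS e n - 2 * (d - 1 + n) * sphS e (n+1) = 0 at h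
  linarith

lemma sphS_zero (hd : 2 ≤ d) (e : EuclideanSpace ℝ (Fin d)) :
    sphS e 0 = 2 * Real.pi ^ ((d : ℝ) / 2) / Real.Gamma ((d : ℝ) / 2) := by
  have : Nonempty (Fin d) := ⟨⟨0, by omega⟩⟩
  have hpos : (0:ℝ) < (d:ℝ) / 2 := by positivity
  have hg := Real.Gamma_pos_of_pos hpos
  simp only [sphS, pow_zero, integral_const, Measure.toSphere_real_apply_univ]
  rw [measureReal_def, EuclideanSpace.volume_ball]
  simp only [finrank_euclideanSpace, Fintype.card_fin, Real.Gamma_add_one hpos.ne']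
  rw [ENNReal.toReal_mul, ENNReal.toReal_ofReal (by positivity)]
  rw [Real.sqrt_eq_rpow, ← Real.rpow_natCast, ← Real.rpow_mul Real.pi_pos.le]
  have : (1:ℝ) / 2 * d = d / 2 := by ring
  rw [this]
  simp
  field_simp

lemma sphS_eq (hd : 2 ≤ d) (e : EuclideanSpace ℝ (Fin d)) (he : ‖e‖ = 1) (n : ℕ) :
    sphS e n = 2 * Real.pi ^ ((d : ℝ) / 2) / Real.Gamma ((d : ℝ) / 2) *
      (poch (((d : ℝ) - 1) / 2) n / poch ((d : ℝ) - 1) n) := by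
  have hd' : (2:ℝ) ≤ d := by exact_mod_cast hd
  induction n with
  | zero => simp [poch, sphS_zero hd]
  | succ n ih =>
    have h := sphS_rec hd e he n
    have hn : (0:ℝ) ≤ n := by positivity
    have h1 : (0:ℝ) < (d : ℝ) - 1 + n := by linarith
    have h2 : poch ((d : ℝ) - 1) n ≠ 0 := by
      unfold poch
      refine (Finset.prod_pos fun i _ => ?_).ne'
      have : (0:ℝ) ≤ i := by positivity
      linarith
    rw [ih] at h
    have e1 : ∀ x : ℝ, poch x (n+1) = poch x n * (x + n) := fun x => Finset.prod_range_succ _ _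
    rw [e1, e1]
    apply mul_left_cancel₀ h1.ne'
    rw [h]
    field_simp

theorem sphere_potential_eq (d : ℕ) (hd : 2 ≤ d) (γ : ℝ)
    (x : EuclideanSpace ℝ (Fin d)) (hx : ‖x‖ ≠ 1) :
    ∫ ω : Metric.sphere (0 : EuclideanSpace ℝ (Fin d)) 1,
        ‖x - (ω : EuclideanSpace ℝ (Fin d))‖ ^ γ ∂(volume.toSphere) =
      2 * Real.pi ^ ((d : ℝ) / 2) / Real.Gamma ((d : ℝ) / 2) * (1 + ‖x‖) ^ γ *
        hyperF (-γ / 2) (((d : ℝ) - 1) / 2) ((d : ℝ) - 1)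
          (4 * ‖x‖ / (1 + ‖x‖) ^ 2) := by
  have : Nonempty (Fin d) := ⟨⟨0, by omega⟩⟩
  obtain ⟨e, he, hxe⟩ : ∃ e : EuclideanSpace ℝ (Fin d), ‖e‖ = 1 ∧ x = ‖x‖ • e := by
    by_cases h0 : x = 0
    · obtain ⟨e, he⟩ := exists_norm_eq (EuclideanSpace ℝ (Fin d)) zero_le_one
      exact ⟨e, he, by simp [h0]⟩
    · have : ‖x‖ ≠ 0 := by simpa using h0
      exact ⟨‖x‖⁻¹ • x, by simp [norm_smul, this], by simp [smul_smul, this]⟩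
  set r := ‖x‖ with hr
  have hr0 : 0 ≤ r := norm_nonneg x
  set z : ℝ := 4 * r / (1 + r) ^ 2 with hz
  have hz0 : 0 ≤ z := by positivity
  have hz1 : z < 1 := by
    rw [hz, div_lt_one (by positivity)]
    have : 0 < (1 - r) ^ 2 := by
      have : 1 - r ≠ 0 := fun h => hx (by linarith)
      positivity
    nlinarith
  have hzabs : |z| < 1 := by rwa [abs_of_nonneg hz0]
  set c : ℕ → ℝ := fun n => poch (-γ / 2) n / (n.factorial : ℝ) with hcdef
  set s : Metric.sphere (0 : EuclideanSpace ℝ (Fin d)) 1 → ℝ :=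
    fun ω => (1 + inner ℝ e (ω : EuclideanSpace ℝ (Fin d))) / 2 with hs
  have hsc : Continuous s := by fun_prop
  have hs01 : ∀ ω, 0 ≤ s ω ∧ s ω ≤ 1 := fun ω => by
    have h := abs_real_inner_le_norm e (ω : EuclideanSpace ℝ (Fin d))
    have hω : ‖(ω : EuclideanSpace ℝ (Fin d))‖ = 1 := by simp
    rw [he, hω, one_mul, abs_le] at h
    simp only [hs]
    constructor <;> linarith [h.1, h.2]
  have hpt : ∀ ω : Metric.sphere (0 : EuclideanSpace ℝ (Fin d)) 1,
      HasSum (fun n => (1 + r) ^ γ * (c n * (z * s ω) ^ n))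
        (‖x - (ω : EuclideanSpace ℝ (Fin d))‖ ^ γ) := fun ω => by
    have hb : |z * s ω| < 1 := by
      rw [abs_of_nonneg (mul_nonneg hz0 (hs01 ω).1)]
      nlinarith [hs01 ω]
    have h := (poch_hasSum (-γ / 2) (z * s ω) hb).mul_left ((1 + r) ^ γ)
    refine (congrArg (HasSum _) ?_).mpr h
    have hω : ‖(ω : EuclideanSpace ℝ (Fin d))‖ = 1 := by simp
    have hn : ‖x - (ω : EuclideanSpace ℝ (Fin d))‖ ^ 2 = (1 + r) ^ 2 * (1 - z * s ω) := by
      rw [norm_sub_sq_real, hω, ← hr, hxe, inner_smul_left]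
      simp only [hz, hs]
      field_simp
      simp
      ring
    have h1 : 0 ≤ 1 - z * s ω := by linarith [(abs_lt.1 hb).2]
    have e1 : ∀ y : ℝ, 0 ≤ y → y ^ γ = (y ^ 2) ^ (γ / 2) := fun y hy => by
      rw [← Real.rpow_natCast, ← Real.rpow_mul hy]
      congr 1
      push_cast
      ring
    rw [e1 _ (norm_nonneg _), hn, Real.mul_rpow (by positivity) h1, ← e1 _ (by positivity)]
    congr 2
    ring
  have hsum : Summable fun n => |c n * z ^ n| := (poch_hasSum (-γ / 2) z hzabs).summable.abs
  have hint := hasSum_integral_of_summable_integral_norm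
    (μ := (volume : Measure (EuclideanSpace ℝ (Fin d))).toSphere)
    (F := fun n ω => (1 + r) ^ γ * (c n * (z * s ω) ^ n))
    (fun n => sph_cont_integrable _ (by fun_prop)) ?_
  · simp_rw [fun ω => (hpt ω).tsum_eq] at hint
    rw [← hint.tsum_eq, hyperF, ← tsum_mul_left]
    congr 1
    ext n
    have : ∀ ω, (1 + r) ^ γ * (c n * (z * s ω) ^ n) = ((1 + r) ^ γ * (c n * z ^ n)) * (s ω) ^ n :=
      fun ω => by ring
    simp_rw [this]
    rw [integral_const_mul]
    change _ * sphS e n = _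
    rw [sphS_eq hd e he]
    simp only [hcdef, div_eq_mul_inv, mul_inv]
    ring
  · refine Summable.of_nonneg_of_le (fun n => integral_nonneg fun ω => norm_nonneg _) (fun n => ?_)
      (hsum.mul_left ((1 + r) ^ γ *
        (volume : Measure (EuclideanSpace ℝ (Fin d))).toSphere.real univ))
    have : ∀ ω, ‖(1 + r) ^ γ * (c n * (z * s ω) ^ n)‖ ≤ (1 + r) ^ γ * |c n * z ^ n| := fun ω => by
      rw [norm_mul, Real.norm_of_nonneg (by positivity), mul_pow, ← mul_assoc, norm_mul,
        Real.norm_eq_abs (c n * z ^ n)]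
      refine mul_le_mul_of_nonneg_left ?_ (by positivity)
      refine mul_le_of_le_one_right (abs_nonneg _) ?_
      rw [norm_pow, Real.norm_of_nonneg (hs01 ω).1]
      exact pow_le_one₀ (hs01 ω).1 (hs01 ω).2
    refine (integral_mono (sph_cont_integrable _ (by fun_prop)) (integrable_const _) this).trans ?_
    rw [integral_const, smul_eq_mul]
    apply le_of_eq
    ring
end
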